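/- Let I ⊆ R be a square-free monomial ideal and x a variable appearing in the minimal generators of I. Then reg(R/(I, x)) ≤ reg(R/I). -/

import Mathlib

/-!
Betti numbers of `R/I` are computed by the Koszul complex `K(R/I)`, and chains are represented
by families of polynomials indexed by the subsets `T` of the variables, read modulo `I`
(`bettiNe_iff`).

Since `x` acts as zero on `R/(I, x)`, a cycle of `K(R/(I, x))` splits as `c₀ + e_x ∧ c₁` with
`c₀` and `c₁` cycles not involving `e_x`. Setting `x = 0` sends `I` into itself and lifts
`R/(I, x)` into `R/I` compatibly with multiplication by the other variables, so `c₀` and `c₁`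
become cycles of `K(R/I)`, of bidegrees `(i, j)` and `(i - 1, j - 1)`. If both are boundaries,
so is the given cycle. Hence a nonzero `β_{ij}(R/(I, x))` forces `β_{ij}(R/I) ≠ 0` or
`β_{i-1,j-1}(R/I) ≠ 0`, with the same difference `j - i` (`bettiP_sup`).

The regularity being a supremum of integers, the set of differences must also be shown to be
bounded above for `R/I` and nonempty for `R/(I, x)`. The second point is `β_{00} ≠ 0`
(`bettiP_zero`). For the first, the homology of `K(R/I)` lives in square-free multidegrees: for
each variable `a`, exterior multiplication by `e_a` combined with division by `a` on monomials
of exponent at least `2` (which preserves a square-free monomial ideal) is a homotopy from the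
identity to the projection on multidegrees at most `1` in `a` (`D_homot`). Applying all these
projections kills a cycle whose coefficients have degree greater than the number of variables
(`bettiP_bound`).
-/

/-!
Common setup: square-free monomial ideals in `R = K[A]` (here `MvPolynomial σ K`
with `σ` the finite alphabet `A`), encoded by the finite antichain `G` of
supports of their minimal monomial generators; the labeled hypergraph `H(I)`
of such an ideal, whose vertex set is (in bijection with) `G` and whose edge
labeled by a variable `a` is `E_a = { S ∈ G : a ∈ S }`; and Castelnuovo–Mumford
regularity and projective dimension of `R/I`, defined via graded Betti numbers
`β_{ij}(R/I) = dim_K Tor_i^R(R/I, K)_j`, which are computed from the Koszul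
complex of the variables tensored with `R/I`.
-/

open MvPolynomial Finset
open scoped Classical

namespace SqfreeHyp

variable (σ : Type) [Fintype σ] [LinearOrder σ] (K : Type) [Field K]

/-- The square-free monomial `∏_{a ∈ S} a`. -/
noncomputable def sqMon (S : Finset σ) : MvPolynomial σ K := ∏ a ∈ S, X a

/-- The square-free monomial ideal whose (minimal) monomial generators have
supports exactly the members of `G`. -/
noncomputable def monIdeal (G : Finset (Finset σ)) : Ideal (MvPolynomial σ K) :=
  Ideal.span ((fun S => sqMon σ K S) '' (G : Set (Finset σ)))

/-- `G` is an antichain under inclusion (= divisibility of the square-free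
monomials): the corresponding monomial generating set is minimal. -/
def MinGens (G : Finset (Finset σ)) : Prop := ∀ S ∈ G, ∀ T ∈ G, S ⊆ T → S = T

/-- `E_a`: the edge of the labeled hypergraph `H(I)` labeled by the variable `a`,
consisting of the (vertices corresponding to the) generators divisible by `a`. -/
def EdgeOf (G : Finset (Finset σ)) (a : σ) : Finset (Finset σ) :=
  G.filter (fun S => a ∈ S)

/-- The set `𝓔` of (nonempty) edges of the labeled hypergraph. -/
noncomputable def edgeSet (G : Finset (Finset σ)) : Finset (Finset (Finset σ)) :=
  (Finset.univ.image (EdgeOf σ G)).filter (· ≠ ∅)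

/-- `X`: the set of variables appearing among the generators (the labels). -/
def varsOf (G : Finset (Finset σ)) : Finset σ := G.biUnion id

/-- A vertex is closed if its singleton is an edge. -/
def Closed (G : Finset (Finset σ)) (v : Finset σ) : Prop :=
  ∃ a : σ, EdgeOf σ G a = {v}

/-- The neighbors `N_H(v)` of a vertex: the other vertices sharing an edge with `v`. -/
noncomputable def Neighbors (G : Finset (Finset σ)) (v : Finset σ) : Finset (Finset σ) :=
  G.filter (fun w => w ≠ v ∧ ∃ a : σ, v ∈ EdgeOf σ G a ∧ w ∈ EdgeOf σ G a)

/-- The open (= not closed) vertices. -/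
noncomputable def openVerts (G : Finset (Finset σ)) : Finset (Finset σ) :=
  G.filter (fun v => ¬ Closed σ G v)

/-- The minimal members of a family of supports (used to pass to the minimal
monomial generating sets of colon ideals and sums). -/
def minimalize (A : Finset (Finset σ)) : Finset (Finset σ) :=
  A.filter (fun S => ∀ T ∈ A, T ⊆ S → T = S)

/-- An edge is simple if it has at least two vertices and has no proper
subedge besides `∅`. -/
def SimpleEdge (G : Finset (Finset σ)) (F : Finset (Finset σ)) : Prop :=
  F ∈ edgeSet σ G ∧ 2 ≤ F.card ∧ ∀ F' ∈ edgeSet σ G, F' ⊆ F → F' = F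

/-- The set of simple edges. -/
noncomputable def simpleEdges (G : Finset (Finset σ)) : Finset (Finset (Finset σ)) :=
  (edgeSet σ G).filter (fun F => SimpleEdge σ G F)

/-- `H(I)` has isolated simple edges: every open vertex is contained in
exactly one simple edge. -/
def HasIsolatedSimpleEdges (G : Finset (Finset σ)) : Prop :=
  ∀ v ∈ G, ¬ Closed σ G v → ∃! F : Finset (Finset σ), SimpleEdge σ G F ∧ v ∈ F

/-! ### Regularity via graded Betti numbers.
`β_{ij}(R/I) = dim_K Tor_i^R(R/I,K)_j` where `Tor` is computed by the Koszul
complex on the variables of `R` tensored with `R/I`; its `i`-th term has basis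
indexed by `i`-element subsets of the variables, with coefficients in `R/I`. -/

/-- Index of the degree-`i` term of the Koszul complex. -/
abbrev KT (i : ℕ) : Type _ := {T : Finset σ // T.card = i}

/-- The Koszul differential on `K_•(x_a : a) ⊗ R/I`. -/
noncomputable def kd (I : Ideal (MvPolynomial σ K)) (i : ℕ)
    (c : KT σ i →₀ (MvPolynomial σ K ⧸ I)) :
    KT σ (i - 1) →₀ (MvPolynomial σ K ⧸ I) :=
  c.sum fun T m => ∑ a ∈ T.1.attach,
    ((-1 : ℤ) ^ ((T.1.filter (fun b => b < a.1)).card)) •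
      Finsupp.single
        (⟨T.1.erase a.1, by rw [Finset.card_erase_of_mem a.2, T.2]⟩ : KT σ (i - 1))
        ((X a.1 : MvPolynomial σ K) • m)

/-- `c` is homogeneous of internal degree `j` (each coefficient at a size-`i`
subset is the class of a homogeneous polynomial of degree `j - i`). -/
def IsHomogEl (I : Ideal (MvPolynomial σ K)) (i j : ℕ)
    (c : KT σ i →₀ (MvPolynomial σ K ⧸ I)) : Prop :=
  ∀ T : KT σ i, ∃ p : MvPolynomial σ K,
    p.IsHomogeneous (j - i) ∧ Ideal.Quotient.mk I p = c T

/-- The graded Betti number `β_{ij}(R/I)` is nonzero: there is a homogeneous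
cycle of internal degree `j` in homological degree `i` of the Koszul complex
tensored with `R/I` which is not a boundary. -/
def BettiNe (I : Ideal (MvPolynomial σ K)) (i j : ℕ) : Prop :=
  ∃ c : KT σ i →₀ (MvPolynomial σ K ⧸ I),
    IsHomogEl σ K I i j c ∧ kd σ K I i c = 0 ∧
    ∀ b : KT σ (i + 1) →₀ (MvPolynomial σ K ⧸ I), kd σ K I (i + 1) b ≠ c

/-- Castelnuovo–Mumford regularity of `R/I`: `max { j - i : β_{ij}(R/I) ≠ 0 }`. -/
noncomputable def reg (I : Ideal (MvPolynomial σ K)) : ℤ :=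
  sSup { d : ℤ | ∃ i j : ℕ, BettiNe σ K I i j ∧ d = (j : ℤ) - (i : ℤ) }

/-- Projective dimension of `R/I`: `max { i : β_{ij}(R/I) ≠ 0 for some j }`. -/
noncomputable def pdim (I : Ideal (MvPolynomial σ K)) : ℕ :=
  sSup { i : ℕ | ∃ j : ℕ, BettiNe σ K I i j }

end SqfreeHyp

open SqfreeHyp

namespace KoszulReg

set_option linter.unusedSectionVars false

variable {σ : Type} [Fintype σ] [LinearOrder σ] {K : Type} [Field K]

/-! ### The Koszul differential on polynomial-valued cochains -/

/-- The Koszul sign `(-1) ^ #{b ∈ T | b < a}`. -/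
def eps (a : σ) (T : Finset σ) : ℤ := (-1) ^ (T.filter (fun b => b < a)).card

lemma eps_mul_self (a : σ) (T : Finset σ) : eps a T * eps a T = 1 := by
  unfold eps
  rw [← mul_pow]
  simp

/-- Anticommutation of the exterior variables `e_a` and `e_b`. -/
lemma eps_swap {a b : σ} {T : Finset σ} (hab : b ≠ a) (ha : a ∉ T) (hb : b ∉ T) :
    eps b T * eps a (insert b T) = -(eps a T * eps b (insert a T)) := by
  unfold eps
  rw [Finset.filter_insert, Finset.filter_insert]
  rcases lt_or_gt_of_ne hab with h | h
  · rw [if_pos h, if_neg (not_lt.2 h.le), Finset.card_insert_of_notMem (by simp [hb]), pow_succ]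
    ring
  · rw [if_pos h, if_neg (not_lt.2 h.le), Finset.card_insert_of_notMem (by simp [ha]), pow_succ]
    ring

/-- The variant of `eps_swap` comparing the signs on enlarged sets with those on `T`. -/
lemma eps_swap' {a b : σ} {T : Finset σ} (hab : b ≠ a) (ha : a ∉ T) (hb : b ∉ T) :
    eps b (insert a T) * eps a (insert b T) = -(eps a T * eps b T) := by
  have h := eps_swap hab ha hb
  have h1 := eps_mul_self b T
  have h2 := eps_mul_self b (insert a T)
  linear_combination (eps b T * eps b (insert a T)) * h
    - (eps b (insert a T) * eps a (insert b T)) * h1 - (eps a T * eps b T) * h2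

/-- The Koszul differential of a family `f` of polynomials indexed by all subsets of the
variables; all homological degrees are treated at once, and chains with coefficients in
`R/I` are handled through representatives, modulo `I`. -/
noncomputable def D (f : Finset σ → MvPolynomial σ K) (T : Finset σ) : MvPolynomial σ K :=
  ∑ b ∈ Tᶜ, eps b T • (X b * f (insert b T))

/-- Nonvanishing of the graded Betti number `β_{ij}(R/I)`, in terms of polynomial
representatives of cycles and boundaries. -/
def BettiP (I : Ideal (MvPolynomial σ K)) (i j : ℕ) : Prop :=
  ∃ f : Finset σ → MvPolynomial σ K,
    (∀ T, T.card = i → (f T).IsHomogeneous (j - i)) ∧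
    (∀ T, T.card + 1 = i → D f T ∈ I) ∧
    ¬ ∃ g : Finset σ → MvPolynomial σ K, ∀ T, T.card = i → D g T - f T ∈ I

lemma kd_apply (I : Ideal (MvPolynomial σ K)) (i : ℕ)
    (c : KT σ (i + 1) →₀ (MvPolynomial σ K ⧸ I)) (f : Finset σ → MvPolynomial σ K)
    (hf : ∀ U : KT σ (i + 1), c U = Ideal.Quotient.mk I (f U.1)) (T : KT σ i) :
    kd σ K I (i + 1) c T = Ideal.Quotient.mk I (D f T.1) := by
  have key : ∀ U : KT σ (i + 1),
      (∑ a ∈ U.1.attach, ((-1 : ℤ) ^ ((U.1.filter (fun b => b < a.1)).card)) •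
      Finsupp.single
        (⟨U.1.erase a.1, by rw [Finset.card_erase_of_mem a.2, U.2]⟩ : KT σ (i + 1 - 1))
        ((X a.1 : MvPolynomial σ K) • c U)) T =
      ∑ a : σ, if a ∈ U.1 ∧ U.1.erase a = T.1 then
        Ideal.Quotient.mk I (eps a T.1 • (X a * f U.1)) else 0 := by
    intro U
    rw [Finsupp.finsetSum_apply, ← Finset.sum_filter_add_sum_filter_not univ (fun a => a ∈ U.1)]
    rw [Finset.sum_eq_zero (s := univ.filter (fun a => a ∉ U.1)), add_zero]
    · rw [← Finset.sum_coe_sort_eq_attach]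
      rw [show (univ.filter (fun a => a ∈ U.1)) = U.1 by ext; simp, ← Finset.sum_coe_sort U.1]
      refine Finset.sum_congr rfl fun a _ => ?_
      rw [Finsupp.smul_apply, Finsupp.single_apply]
      by_cases h : U.1.erase a.1 = T.1
      · rw [if_pos (Subtype.ext h), if_pos ⟨a.2, h⟩, map_zsmul, map_mul, hf, ← h]
        congr 1
        unfold eps
        rw [Finset.filter_erase, Finset.erase_eq_of_notMem (by simp)]
      · rw [if_neg (fun h' => h (congrArg Subtype.val h')), if_neg (fun h' => h h'.2), smul_zero]
    · intro a ha
      rw [if_neg]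
      intro h
      exact (Finset.mem_filter.1 ha).2 h.1
  unfold kd
  rw [Finsupp.sum_fintype _ _ (by intro U; simp), Finsupp.finsetSum_apply]
  rw [Finset.sum_congr rfl (fun U _ => key U), Finset.sum_comm]
  unfold D
  rw [map_sum, ← Finset.sum_subset (Finset.subset_univ ((T.1)ᶜ))]
  · refine Finset.sum_congr rfl fun a ha => ?_
    have ha' : a ∉ T.1 := by simpa using ha
    rw [Finset.sum_eq_single (⟨insert a T.1, by
      rw [Finset.card_insert_of_notMem ha', T.2]⟩ : KT σ (i + 1))]
    · rw [if_pos ⟨Finset.mem_insert_self _ _, Finset.erase_insert ha'⟩]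
    · intro U _ hU
      rw [if_neg]
      rintro ⟨h1, h2⟩
      apply hU
      apply Subtype.ext
      change U.1 = insert a T.1
      rw [← h2, Finset.insert_erase h1]
    · simp
  · intro a _ ha
    have ha' : a ∈ T.1 := by simpa using ha
    refine Finset.sum_eq_zero fun U _ => ?_
    rw [if_neg]
    rintro ⟨_, h2⟩
    rw [← h2] at ha'
    simp at ha'

lemma kd_zero (I : Ideal (MvPolynomial σ K)) (c : KT σ 0 →₀ (MvPolynomial σ K ⧸ I)) :
    kd σ K I 0 c = 0 := by
  unfold kd
  rw [Finsupp.sum_fintype _ _ (by intro U; simp)]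
  refine Finset.sum_eq_zero fun U _ => Finset.sum_eq_zero fun a _ => ?_
  exact absurd (Finset.card_eq_zero.1 U.2) (Finset.ne_empty_of_mem a.2)

/-- The chain with coefficients in `R/I` represented by a family of polynomials. -/
noncomputable def toChain (I : Ideal (MvPolynomial σ K)) (i : ℕ)
    (f : Finset σ → MvPolynomial σ K) : KT σ i →₀ (MvPolynomial σ K ⧸ I) :=
  Finsupp.equivFunOnFinite.symm fun U => Ideal.Quotient.mk I (f U.1)

lemma toChain_apply (I : Ideal (MvPolynomial σ K)) (i : ℕ)
    (f : Finset σ → MvPolynomial σ K) (U : KT σ i) :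
    toChain I i f U = Ideal.Quotient.mk I (f U.1) := rfl

lemma exists_rep (I : Ideal (MvPolynomial σ K)) (i : ℕ)
    (c : KT σ i →₀ (MvPolynomial σ K ⧸ I)) (P : MvPolynomial σ K → Prop)
    (hP : ∀ U, ∃ p, P p ∧ Ideal.Quotient.mk I p = c U) :
    ∃ f : Finset σ → MvPolynomial σ K, (∀ T, T.card = i → P (f T)) ∧
      ∀ U : KT σ i, c U = Ideal.Quotient.mk I (f U.1) := by
  choose q hq using hP
  refine ⟨fun T => if h : T.card = i then q ⟨T, h⟩ else 0, ?_, ?_⟩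
  · intro T hT
    simpa [hT] using (hq ⟨T, hT⟩).1
  · intro U
    simp [U.2, (hq U).2]

lemma bettiNe_iff (I : Ideal (MvPolynomial σ K)) (i j : ℕ) :
    BettiNe σ K I i j ↔ BettiP I i j := by
  constructor
  · rintro ⟨c, hc, hz, hb⟩
    obtain ⟨f, hf, hfc⟩ := exists_rep I i c (fun p => p.IsHomogeneous (j - i)) hc
    refine ⟨f, hf, ?_, ?_⟩
    · intro T hT
      subst hT
      have := kd_apply I _ c f hfc ⟨T, rfl⟩
      rw [hz] at this
      exact Ideal.Quotient.eq_zero_iff_mem.1 this.symm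
    · rintro ⟨g, hg⟩
      apply hb (toChain I (i + 1) g)
      ext T
      have := kd_apply I i (toChain I (i + 1) g) g (fun _ => rfl) T
      refine this.trans ?_
      rw [hfc]
      exact Ideal.Quotient.eq.2 (hg T.1 T.2)
  · rintro ⟨f, hf, hz, hb⟩
    refine ⟨toChain I i f, fun T => ⟨f T.1, hf T.1 T.2, rfl⟩, ?_, ?_⟩
    · cases i with
      | zero => exact kd_zero I _
      | succ i =>
        ext T
        refine (kd_apply I i (toChain I (i + 1) f) f (fun _ => rfl) T).trans ?_
        exact Ideal.Quotient.eq_zero_iff_mem.2 (hz T.1 (by rw [T.2]; rfl))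
    · intro b hbc
      apply hb
      obtain ⟨g, -, hg⟩ := exists_rep I (i + 1) b (fun _ => True)
        (fun U => ⟨_, trivial, (Ideal.Quotient.mk_surjective (b U)).choose_spec⟩)
      refine ⟨g, fun T hT => ?_⟩
      have := kd_apply I i b g hg ⟨T, hT⟩
      rw [hbc] at this
      exact Ideal.Quotient.eq.1 this.symm

/-! ### Truncation and division with respect to one variable -/

/-- The part of a polynomial supported on monomials whose exponent at `a` is at most `k`. -/
noncomputable def trunc (a : σ) (k : ℕ) : MvPolynomial σ K →+ MvPolynomial σ K where
  toFun p := ∑ m ∈ p.support with m a ≤ k, monomial m (coeff m p)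
  map_zero' := by simp
  map_add' p q := by
    have h : ∀ (r : MvPolynomial σ K) (m : σ →₀ ℕ),
        coeff m (∑ m ∈ r.support with m a ≤ k, monomial m (coeff m r)) =
          if m a ≤ k then coeff m r else 0 := by
      intro r m
      rw [coeff_sum]
      simp only [coeff_monomial, Finset.sum_ite_eq', Finset.mem_filter, mem_support_iff]
      split_ifs <;> simp_all
    ext m
    rw [coeff_add, h, h, h, coeff_add]
    split_ifs <;> simp

lemma coeff_trunc (a : σ) (k : ℕ) (p : MvPolynomial σ K) (m : σ →₀ ℕ) :
    coeff m (trunc a k p) = if m a ≤ k then coeff m p else 0 := by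
  change coeff m (∑ m ∈ p.support with m a ≤ k, monomial m (coeff m p)) = _
  rw [coeff_sum]
  simp only [coeff_monomial, Finset.sum_ite_eq', Finset.mem_filter, mem_support_iff]
  split_ifs <;> simp_all

/-- The additive map sending a monomial `m` to `m / X a` when the exponent of `m` at `a` is
at least `2`, and to `0` otherwise. The bound `2` makes it preserve square-free monomial
ideals. -/
noncomputable def delta (a : σ) : MvPolynomial σ K →+ MvPolynomial σ K where
  toFun p := (p - trunc a 1 p).divMonomial (Finsupp.single a 1)
  map_zero' := by simp
  map_add' p q := by
    ext m
    simp only [coeff_divMonomial, coeff_sub, coeff_add, map_add]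
    ring

lemma coeff_delta (a : σ) (p : MvPolynomial σ K) (m : σ →₀ ℕ) :
    coeff m (delta a p) = if 1 ≤ m a then coeff (Finsupp.single a 1 + m) p else 0 := by
  change coeff m ((p - trunc a 1 p).divMonomial (Finsupp.single a 1)) = _
  rw [coeff_divMonomial, coeff_sub, coeff_trunc]
  have : (Finsupp.single a 1 + m : σ →₀ ℕ) a = 1 + m a := by simp
  rw [this]
  split_ifs <;> first | omega | simp

lemma coeff_X_mul_ite (b : σ) (p : MvPolynomial σ K) (m : σ →₀ ℕ) :
    coeff m (X b * p) = if m b = 0 then 0 else coeff (m - Finsupp.single b 1) p := by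
  rw [coeff_X_mul']
  simp only [Finsupp.mem_support_iff]
  split_ifs <;> simp_all

lemma trunc_X_mul_of_ne {a b : σ} (h : b ≠ a) (k : ℕ) (p : MvPolynomial σ K) :
    trunc a k (X b * p) = X b * trunc a k p := by
  ext m
  rw [coeff_trunc, coeff_X_mul_ite, coeff_X_mul_ite, coeff_trunc]
  have : (m - Finsupp.single b 1 : σ →₀ ℕ) a = m a := by simp [h]
  rw [this]
  split_ifs <;> rfl

lemma trunc_succ_X_mul (a : σ) (k : ℕ) (p : MvPolynomial σ K) :
    trunc a (k + 1) (X a * p) = X a * trunc a k p := by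
  ext m
  rw [coeff_trunc, coeff_X_mul_ite, coeff_X_mul_ite, coeff_trunc]
  have : (m - Finsupp.single a 1 : σ →₀ ℕ) a = m a - 1 := by simp
  rw [this]
  split_ifs <;> first | rfl | omega

lemma trunc_zero_X_mul (a : σ) (p : MvPolynomial σ K) : trunc a 0 (X a * p) = 0 := by
  ext m
  rw [coeff_trunc, coeff_X_mul_ite]
  split_ifs <;> first | omega | simp

lemma delta_X_mul_of_ne {a b : σ} (h : b ≠ a) (p : MvPolynomial σ K) :
    delta a (X b * p) = X b * delta a p := by
  ext m
  rw [coeff_delta, coeff_X_mul_ite, coeff_X_mul_ite, coeff_delta]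
  have h1 : (m - Finsupp.single b 1 : σ →₀ ℕ) a = m a := by simp [h]
  have h2 : (Finsupp.single a 1 + m : σ →₀ ℕ) b = m b := by simp [h.symm]
  rw [h1, h2]
  have h3 : m b ≠ 0 → Finsupp.single a 1 + m - Finsupp.single b 1
      = Finsupp.single a 1 + (m - Finsupp.single b 1) := by
    intro hb
    rw [add_tsub_assoc_of_le]
    rw [Finsupp.single_le_iff]
    omega
  split_ifs with h4 h5 <;> first | rfl | rw [h3 ‹_›]

lemma delta_X_mul (a : σ) (p : MvPolynomial σ K) :
    delta a (X a * p) = p - trunc a 0 p := by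
  ext m
  rw [coeff_delta, coeff_X_mul_ite, coeff_sub, coeff_trunc]
  have h2 : (Finsupp.single a 1 + m : σ →₀ ℕ) a = 1 + m a := by simp
  rw [h2, add_tsub_cancel_left]
  split_ifs <;> first | omega | simp

lemma X_mul_delta (a : σ) (p : MvPolynomial σ K) :
    X a * delta a p = p - trunc a 1 p := by
  ext m
  rw [coeff_X_mul_ite, coeff_delta, coeff_sub, coeff_trunc]
  have h1 : (m - Finsupp.single a 1 : σ →₀ ℕ) a = m a - 1 := by simp
  rw [h1]
  have h3 : m a ≠ 0 → Finsupp.single a 1 + (m - Finsupp.single a 1) = m := by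
    intro hb
    rw [add_tsub_cancel_of_le]
    rw [Finsupp.single_le_iff]
    omega
  split_ifs <;> first | omega | (rw [h3 ‹_›]; simp) | simp

lemma sub_trunc_zero_mem (a : σ) (p : MvPolynomial σ K) :
    p - trunc a 0 p ∈ Ideal.span {(X a : MvPolynomial σ K)} := by
  rw [Ideal.mem_span_singleton]
  refine ⟨p.divMonomial (Finsupp.single a 1), ?_⟩
  ext m
  rw [coeff_X_mul_ite, coeff_divMonomial, coeff_sub, coeff_trunc]
  have h3 : m a ≠ 0 → Finsupp.single a 1 + (m - Finsupp.single a 1) = m := by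
    intro hb
    rw [add_tsub_cancel_of_le]
    rw [Finsupp.single_le_iff]
    omega
  split_ifs <;> first | omega | (rw [h3 ‹_›]; simp) | simp

lemma trunc_homog (a : σ) (k d : ℕ) {p : MvPolynomial σ K} (hp : p.IsHomogeneous d) :
    (trunc a k p).IsHomogeneous d := by
  intro m hm
  rw [coeff_trunc] at hm
  split_ifs at hm
  · exact hp hm
  · exact absurd rfl hm

/-! ### Square-free monomial ideals -/

lemma mem_monIdeal (G : Finset (Finset σ)) (p : MvPolynomial σ K) :
    p ∈ monIdeal σ K G ↔ ∀ m, coeff m p ≠ 0 → ∃ S ∈ G, ∀ a ∈ S, 1 ≤ m a := by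
  have hs : ∀ S : Finset σ,
      sqMon σ K S = monomial (∑ a ∈ S, Finsupp.single a 1) (1 : K) := by
    intro S
    rw [monomial_sum_one]
    rfl
  have hI : monIdeal σ K G = Ideal.span ((fun s => monomial s (1 : K)) ''
      ((fun S : Finset σ => ∑ a ∈ S, Finsupp.single a 1) '' (G : Set (Finset σ)))) := by
    unfold monIdeal
    rw [Set.image_image]
    congr 2
    funext S
    exact hs S
  rw [hI, mem_ideal_span_monomial_image]
  simp only [Set.exists_mem_image, Finset.mem_coe, mem_support_iff]
  refine forall_congr' fun m => imp_congr Iff.rfl (exists_congr fun S => and_congr Iff.rfl ?_)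
  rw [Finsupp.le_def]
  have hc : ∀ b, (∑ a ∈ S, (Finsupp.single a 1 : σ →₀ ℕ)) b = if b ∈ S then 1 else 0 := by
    intro b
    rw [Finsupp.finsetSum_apply]
    simp [Finsupp.single_apply]
  refine forall_congr' fun b => ?_
  rw [hc]
  split_ifs with h <;> simp [h]

lemma trunc_mem (G : Finset (Finset σ)) (a : σ) (k : ℕ) {p : MvPolynomial σ K}
    (hp : p ∈ monIdeal σ K G) : trunc a k p ∈ monIdeal σ K G := by
  rw [mem_monIdeal] at hp ⊢
  intro m hm
  rw [coeff_trunc] at hm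
  split_ifs at hm
  · exact hp m hm
  · exact absurd rfl hm

lemma delta_mem (G : Finset (Finset σ)) (a : σ) {p : MvPolynomial σ K}
    (hp : p ∈ monIdeal σ K G) : delta a p ∈ monIdeal σ K G := by
  rw [mem_monIdeal] at hp ⊢
  intro m hm
  rw [coeff_delta] at hm
  split_ifs at hm with h
  · obtain ⟨S, hS, hS'⟩ := hp _ hm
    refine ⟨S, hS, fun b hb => ?_⟩
    by_cases hab : b = a
    · rw [hab]; exact h
    · have := hS' b hb
      simpa [Finsupp.single_apply, Ne.symm hab] using this
  · exact absurd rfl hm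

lemma mem_sup_iff (G : Finset (Finset σ)) (x : σ) (p : MvPolynomial σ K) :
    p ∈ monIdeal σ K G ⊔ Ideal.span {(X x : MvPolynomial σ K)} ↔
      trunc x 0 p ∈ monIdeal σ K G := by
  constructor
  · intro h
    obtain ⟨q, hq, r, hr, rfl⟩ := Submodule.mem_sup.1 h
    obtain ⟨s, rfl⟩ := Ideal.mem_span_singleton.1 hr
    rw [map_add, trunc_zero_X_mul, add_zero]
    exact trunc_mem G x 0 hq
  · intro h
    exact Submodule.mem_sup.2 ⟨_, h, _, sub_trunc_zero_mem x p, by ring⟩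

/-! ### Passing from `(I, x)` to `I` -/

/-- Setting `x = 0` in a boundary removes the term in the direction of `x`. -/
lemma trunc_D (x : σ) (f : Finset σ → MvPolynomial σ K) (T : Finset σ) :
    trunc x 0 (D f T) =
      ∑ b ∈ Tᶜ.erase x, eps b T • (X b * trunc x 0 (f (insert b T))) := by
  unfold D
  rw [map_sum, ← Finset.sum_subset (Finset.erase_subset x Tᶜ)]
  · refine Finset.sum_congr rfl fun b hb => ?_
    rw [map_zsmul, trunc_X_mul_of_ne (Finset.ne_of_mem_erase hb)]
  · intro b hb hb'
    have : b = x := by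
      by_contra h
      exact hb' (Finset.mem_erase.2 ⟨h, hb⟩)
    rw [this, map_zsmul, trunc_zero_X_mul, smul_zero]

lemma trunc_D_congr (x : σ) (f g : Finset σ → MvPolynomial σ K) (T : Finset σ)
    (h : ∀ b ∉ T, b ≠ x → trunc x 0 (f (insert b T)) = trunc x 0 (g (insert b T))) :
    trunc x 0 (D f T) = trunc x 0 (D g T) := by
  rw [trunc_D, trunc_D]
  refine Finset.sum_congr rfl fun b hb => ?_
  rw [h b (by simpa using (Finset.mem_erase.1 hb).2) (Finset.mem_erase.1 hb).1]

/-- Contraction with the exterior variable of `x` anticommutes with the Koszul differential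
of the remaining variables. -/
lemma trunc_D_contract (x : σ) (f g : Finset σ → MvPolynomial σ K) (T : Finset σ) (hx : x ∉ T)
    (h : ∀ b ∉ T, b ≠ x →
      trunc x 0 (g (insert b T)) = eps x (insert b T) • trunc x 0 (f (insert x (insert b T)))) :
    trunc x 0 (D g T) = -(eps x T • trunc x 0 (D f (insert x T))) := by
  rw [trunc_D, trunc_D, Finset.compl_insert, Finset.erase_idem, Finset.smul_sum,
    ← Finset.sum_neg_distrib]
  refine Finset.sum_congr rfl fun b hb => ?_
  have hbx := (Finset.mem_erase.1 hb).1
  have hbT : b ∉ T := by simpa using (Finset.mem_erase.1 hb).2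
  rw [h b hbT hbx, mul_smul_comm, smul_smul, smul_smul, eps_swap hbx hx hbT, neg_smul,
    Finset.insert_comm]

lemma trunc_trunc (x : σ) (p : MvPolynomial σ K) : trunc x 0 (trunc x 0 p) = trunc x 0 p := by
  ext m
  rw [coeff_trunc, coeff_trunc]
  split_ifs <;> rfl

/-- If all the coefficients of `f` avoid `x` and no index set contains `x`, the differential
of `f` avoids `x`. -/
lemma D_eq_trunc (x : σ) (f : Finset σ → MvPolynomial σ K) (T : Finset σ)
    (h0 : ∀ U, x ∈ U → f U = 0) (h1 : ∀ U, trunc x 0 (f U) = f U) :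
    D f T = trunc x 0 (D f T) := by
  rw [trunc_D]
  unfold D
  rw [← Finset.sum_subset (Finset.erase_subset x Tᶜ)]
  · exact Finset.sum_congr rfl fun b _ => by rw [h1]
  · intro b hb hb'
    have : b = x := by
      by_contra h
      exact hb' (Finset.mem_erase.2 ⟨h, hb⟩)
    rw [this, h0 _ (Finset.mem_insert_self _ _), mul_zero, smul_zero]

lemma D_eq_zero_of_mem (x : σ) (f : Finset σ → MvPolynomial σ K) (T : Finset σ)
    (h0 : ∀ U, x ∈ U → f U = 0) (hx : x ∈ T) : D f T = 0 := by
  unfold D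
  refine Finset.sum_eq_zero fun b _ => ?_
  rw [h0 _ (Finset.mem_insert_of_mem hx), mul_zero, smul_zero]

/-- Write a cycle over `R/(I, x)` as `c₀ + e_x ∧ c₁` with `e_x` occurring in neither `c₀` nor
`c₁`. Setting `x = 0` turns `c₀` and `c₁` into cycles over `R/I`; if both were boundaries,
so would be the original cycle. Passing to `c₁` lowers `i` and `j` by one, keeping `j - i`. -/
lemma bettiP_sup (G : Finset (Finset σ)) (x : σ) (i j : ℕ)
    (h : BettiP (monIdeal σ K G ⊔ Ideal.span {(X x : MvPolynomial σ K)}) i j) :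
    BettiP (monIdeal σ K G) i j ∨ (1 ≤ i ∧ BettiP (monIdeal σ K G) (i - 1) (j - 1)) := by
  obtain ⟨f, hf, hz, hb⟩ := h
  by_contra hcon
  rw [not_or] at hcon
  obtain ⟨hn0, hn1⟩ := hcon
  simp only [mem_sup_iff] at hz hb
  apply hb
  have H0 : ∃ g : Finset σ → MvPolynomial σ K, ∀ T, T.card = i → x ∉ T →
      D g T - trunc x 0 (f T) ∈ monIdeal σ K G := by
    set c : Finset σ → MvPolynomial σ K := fun T => if x ∈ T then 0 else trunc x 0 (f T) with hc
    have hcx : ∀ U, x ∈ U → c U = 0 := fun U hU => by simp [hc, hU]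
    have hct : ∀ U, trunc x 0 (c U) = c U := fun U => by
      simp only [hc]; split_ifs <;> simp [trunc_trunc]
    by_contra hg
    apply hn0
    refine ⟨c, ?_, ?_, ?_⟩
    · intro T hT
      simp only [hc]
      split_ifs
      · exact isHomogeneous_zero _ _ _
      · exact trunc_homog _ _ _ (hf T hT)
    · intro T hT
      by_cases hxT : x ∈ T
      · rw [D_eq_zero_of_mem x c T hcx hxT]; exact zero_mem _
      · rw [D_eq_trunc x c T hcx hct, trunc_D_congr x c f]
        · exact hz T hT
        · intro b hb hbx
          have : x ∉ insert b T := by simp [hxT, hbx.symm]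
          simp [hc, this, trunc_trunc]
    · rintro ⟨g, hg'⟩
      refine hg ⟨g, fun T hT hxT => ?_⟩
      have := hg' T hT
      simpa [hc, hxT] using this
  have H1 : ∃ g : Finset σ → MvPolynomial σ K, ∀ T, T.card + 1 = i → x ∉ T →
      D g T - eps x T • trunc x 0 (f (insert x T)) ∈ monIdeal σ K G := by
    set c : Finset σ → MvPolynomial σ K :=
      fun T => if x ∈ T then 0 else eps x T • trunc x 0 (f (insert x T)) with hc
    have hcx : ∀ U, x ∈ U → c U = 0 := fun U hU => by simp [hc, hU]
    have hct : ∀ U, trunc x 0 (c U) = c U := fun U => by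
      simp only [hc]; split_ifs
      · simp
      · rw [map_zsmul, trunc_trunc]
    by_contra hg
    apply hn1
    have hi : 1 ≤ i := by
      by_contra hi
      exact hg ⟨0, fun T hT => by omega⟩
    refine ⟨hi, c, ?_, ?_, ?_⟩
    · intro T hT
      simp only [hc]
      split_ifs with hxT
      · exact isHomogeneous_zero _ _ _
      · rw [show j - 1 - (i - 1) = j - i by omega]
        have := trunc_homog x 0 _ (hf (insert x T) (by
          rw [Finset.card_insert_of_notMem hxT]; omega))
        exact (homogeneousSubmodule σ K (j - i)).toAddSubgroup.zsmul_mem this _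
    · intro T hT
      by_cases hxT : x ∈ T
      · rw [D_eq_zero_of_mem x c T hcx hxT]; exact zero_mem _
      · rw [D_eq_trunc x c T hcx hct, trunc_D_contract x f c T hxT]
        · exact neg_mem (zsmul_mem (hz _ (by rw [Finset.card_insert_of_notMem hxT]; omega)) _)
        · intro b hb hbx
          have : x ∉ insert b T := by simp [hxT, hbx.symm]
          simp only [hc, if_neg this]
          rw [map_zsmul, trunc_trunc]
    · rintro ⟨g, hg'⟩
      refine hg ⟨g, fun T hT hxT => ?_⟩
      have := hg' T (by omega)
      simpa [hc, hxT] using this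
  obtain ⟨g0, hg0⟩ := H0
  obtain ⟨g1, hg1⟩ := H1
  refine ⟨fun U => if x ∈ U then -(eps x (U.erase x) • g1 (U.erase x)) else g0 U, ?_⟩
  set g : Finset σ → MvPolynomial σ K :=
    fun U => if x ∈ U then -(eps x (U.erase x) • g1 (U.erase x)) else g0 U with hg
  intro T hT
  by_cases hxT : x ∈ T
  · obtain ⟨T', hxT', rfl⟩ : ∃ T', x ∉ T' ∧ insert x T' = T :=
      ⟨T.erase x, by simp, Finset.insert_erase hxT⟩
    rw [Finset.card_insert_of_notMem hxT'] at hT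
    have key := trunc_D_contract x g (fun U => -(g1 U)) T' hxT' (by
      intro b hb hbx
      have : x ∉ insert b T' := by simp [hxT', hbx.symm]
      simp only [hg, if_pos (Finset.mem_insert_self x _), Finset.erase_insert this]
      rw [map_neg, map_neg, map_zsmul, smul_neg, smul_smul, eps_mul_self, one_smul])
    have hneg : D (fun U => -(g1 U)) T' = -(D g1 T') := by
      unfold D
      rw [← Finset.sum_neg_distrib]
      exact Finset.sum_congr rfl fun b _ => by rw [mul_neg, smul_neg]
    rw [hneg, map_neg, neg_inj] at key
    have h1 := trunc_mem G x 0 (hg1 T' hT hxT')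
    rw [map_sub, key, map_zsmul, trunc_trunc, ← smul_sub] at h1
    have h2 := zsmul_mem h1 (eps x T')
    rw [smul_smul, eps_mul_self, one_smul] at h2
    rw [map_sub]
    exact h2
  · have h1 := trunc_mem G x 0 (hg0 T hT hxT)
    rw [map_sub, trunc_trunc] at h1
    rw [map_sub, trunc_D_congr x g g0 T]
    · exact h1
    · intro b hb hbx
      have : x ∉ insert b T := by simp [hxT, hbx.symm]
      simp [hg, this]

/-! ### Boundedness of the degrees -/

/-- The contracting homotopy attached to `a`: exterior multiplication by `e_a` composed with
the division `delta a` of the coefficients. -/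
noncomputable def homot (a : σ) (f : Finset σ → MvPolynomial σ K) (T : Finset σ) :
    MvPolynomial σ K :=
  if a ∈ T then eps a (T.erase a) • delta a (f (T.erase a)) else 0

/-- The part of `f` of multidegree at most `1` in `a`, where `T` contributes to the
multidegree. -/
noncomputable def proj (a : σ) (f : Finset σ → MvPolynomial σ K) (T : Finset σ) :
    MvPolynomial σ K :=
  trunc a (if a ∈ T then 0 else 1) (f T)

/-- The homotopy identity `d h + h d = id - proj`. -/
lemma D_homot (a : σ) (f : Finset σ → MvPolynomial σ K) (T : Finset σ) :
    D (homot a f) T + homot a (D f) T = f T - proj a f T := by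
  by_cases haT : a ∈ T
  · obtain ⟨T', ha, rfl⟩ : ∃ T', a ∉ T' ∧ insert a T' = T :=
      ⟨T.erase a, by simp, Finset.insert_erase haT⟩
    have e1 : homot a (D f) (insert a T') = eps a T' • delta a (D f T') := by
      simp [homot, Finset.erase_insert ha]
    have e2 : delta a (D f T') = eps a T' • (f (insert a T') - trunc a 0 (f (insert a T'))) +
        ∑ b ∈ T'ᶜ.erase a, eps b T' • (X b * delta a (f (insert b T'))) := by
      unfold D
      rw [map_sum, ← Finset.add_sum_erase _ _ (Finset.mem_compl.2 ha), map_zsmul, delta_X_mul]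
      congr 1
      refine Finset.sum_congr rfl fun b hb => ?_
      rw [map_zsmul, delta_X_mul_of_ne (Finset.ne_of_mem_erase hb)]
    have e3 : D (homot a f) (insert a T') =
        -(eps a T' • ∑ b ∈ T'ᶜ.erase a, eps b T' • (X b * delta a (f (insert b T')))) := by
      unfold D
      rw [Finset.compl_insert, Finset.smul_sum, ← Finset.sum_neg_distrib]
      refine Finset.sum_congr rfl fun b hb => ?_
      have hba := (Finset.mem_erase.1 hb).1
      have hbT : b ∉ T' := by simpa using (Finset.mem_erase.1 hb).2
      have hab : a ∉ insert b T' := by simp [ha, hba.symm]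
      rw [Finset.insert_comm]
      simp only [homot, if_pos (Finset.mem_insert_self a _), Finset.erase_insert hab]
      rw [mul_smul_comm, smul_smul, smul_smul, eps_swap' hba ha hbT, neg_smul]
    rw [e1, e2, e3, smul_add, smul_smul, eps_mul_self, one_smul]
    simp only [proj, if_pos (Finset.mem_insert_self a _)]
    abel
  · have e1 : homot a (D f) T = 0 := by simp [homot, haT]
    have e2 : D (homot a f) T = X a * delta a (f T) := by
      unfold D
      rw [Finset.sum_eq_single a]
      · simp only [homot, if_pos (Finset.mem_insert_self a _), Finset.erase_insert haT]
        rw [mul_smul_comm, smul_smul, eps_mul_self, one_smul]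
      · intro b hb hba
        have hab : a ∉ insert b T := by simp [haT, hba.symm]
        simp [homot, hab]
      · intro h
        simp [haT] at h
    rw [e1, e2, add_zero, X_mul_delta]
    simp [proj, haT]

lemma D_proj (a : σ) (f : Finset σ → MvPolynomial σ K) (T : Finset σ) :
    D (proj a f) T = proj a (D f) T := by
  unfold D proj
  rw [map_sum]
  refine Finset.sum_congr rfl fun b hb => ?_
  have hbT : b ∉ T := by simpa using hb
  rw [map_zsmul]
  by_cases hba : b = a
  · subst hba
    rw [if_pos (Finset.mem_insert_self b _), if_neg hbT, trunc_succ_X_mul]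
  · have : a ∈ insert b T ↔ a ∈ T := by simp [Ne.symm hba]
    simp only [this]
    rw [trunc_X_mul_of_ne hba]

lemma D_add (f g : Finset σ → MvPolynomial σ K) (T : Finset σ) :
    D (f + g) T = D f T + D g T := by
  unfold D
  rw [← Finset.sum_add_distrib]
  exact Finset.sum_congr rfl fun b _ => by rw [Pi.add_apply, mul_add, smul_add]

/-- Every homogeneous cycle modulo a square-free monomial ideal is homologous to one whose
coefficients are square-free in any prescribed set of variables. -/
lemma exists_sqfree_rep (G : Finset (Finset σ)) (i d : ℕ) (f : Finset σ → MvPolynomial σ K)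
    (hf : ∀ T, T.card = i → (f T).IsHomogeneous d)
    (hz : ∀ T, T.card + 1 = i → D f T ∈ monIdeal σ K G) (A : Finset σ) :
    ∃ f' g : Finset σ → MvPolynomial σ K,
      (∀ T, T.card = i → (f' T).IsHomogeneous d) ∧
      (∀ T, T.card + 1 = i → D f' T ∈ monIdeal σ K G) ∧
      (∀ T, T.card = i → D g T + f' T - f T ∈ monIdeal σ K G) ∧
      (∀ a ∈ A, ∀ T m, coeff m (f' T) ≠ 0 → m a ≤ 1) := by
  induction A using Finset.induction_on with
  | empty =>
    refine ⟨f, 0, hf, hz, ?_, by simp⟩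
    intro T _
    have : D (0 : Finset σ → MvPolynomial σ K) T = 0 := by simp [D]
    rw [this, zero_add, sub_self]
    exact zero_mem _
  | insert a A _ ih =>
    obtain ⟨f', g, h1, h2, h3, h4⟩ := ih
    refine ⟨proj a f', g + homot a f', ?_, ?_, ?_, ?_⟩
    · intro T hT
      exact trunc_homog _ _ _ (h1 T hT)
    · intro T hT
      rw [D_proj]
      exact trunc_mem G _ _ (h2 T hT)
    · intro T hT
      have e : homot a (D f') T ∈ monIdeal σ K G := by
        unfold homot
        split_ifs with ha
        · refine zsmul_mem (delta_mem G a (h2 _ ?_)) _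
          rw [Finset.card_erase_add_one ha, hT]
        · exact zero_mem _
      have := sub_mem (h3 T hT) e
      rw [D_add]
      have hh := D_homot a f' T
      convert this using 1
      linear_combination hh
    · intro b hb T m hm
      simp only [proj, coeff_trunc] at hm
      rcases Finset.mem_insert.1 hb with rfl | hb
      · by_contra hlt
        apply hm
        rw [if_neg]
        split_ifs <;> omega
      · refine h4 b hb T m fun h0 => hm ?_
        rw [h0, ite_self]

lemma bettiP_bound (G : Finset (Finset σ)) (i j : ℕ) (h : BettiP (monIdeal σ K G) i j) :
    j - i ≤ Fintype.card σ := by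
  obtain ⟨f, hf, hz, hb⟩ := h
  by_contra hlt
  obtain ⟨f', g, h1, -, h3, h4⟩ := exists_sqfree_rep G i (j - i) f hf hz univ
  refine hb ⟨g, fun T hT => ?_⟩
  have h0 : f' T = 0 := by
    ext m
    by_contra hm
    have hm' : coeff m (f' T) ≠ 0 := by simpa using hm
    have hd := h1 T hT hm'
    change Finsupp.weight (fun _ => 1) m = j - i at hd
    rw [← Finsupp.degree_eq_weight_one, Finsupp.degree_eq_sum] at hd
    have : ∑ a, m a ≤ ∑ _a : σ, 1 :=
      Finset.sum_le_sum fun a _ => h4 a (Finset.mem_univ a) T m hm'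
    simp at this
    omega
  simpa [h0] using h3 T hT

lemma bettiP_zero (G : Finset (Finset σ)) (hne : ∀ S ∈ G, S.Nonempty) (x : σ) :
    BettiP (monIdeal σ K G ⊔ Ideal.span {(X x : MvPolynomial σ K)}) 0 0 := by
  refine ⟨fun _ => 1, fun T _ => isHomogeneous_one _ _, fun T hT => by omega, ?_⟩
  rintro ⟨g, hg⟩
  have h := hg ∅ rfl
  rw [mem_sup_iff, mem_monIdeal] at h
  obtain ⟨S, hS, hS'⟩ := h 0 (by
    have hD : coeff 0 (D g ∅) = 0 := by
      unfold D
      rw [coeff_sum]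
      refine Finset.sum_eq_zero fun b _ => ?_
      rw [coeff_smul, coeff_X_mul_ite]
      simp
    rw [coeff_trunc, coeff_sub, hD]
    simp)
  obtain ⟨a, ha⟩ := hne S hS
  simpa using hS' a ha

end KoszulReg

/-- Lemma `Ldhs`: for a square-free monomial ideal `I` and
a variable `x` appearing in its minimal generators,
`reg(R/(I, x)) ≤ reg(R/I)`. -/
theorem stmt_14 (σ : Type) [Fintype σ] [LinearOrder σ] (K : Type) [Field K]
    (G : Finset (Finset σ)) (hmin : MinGens σ G) (hne : ∀ S ∈ G, S.Nonempty)
    (x : σ) (hx : x ∈ varsOf σ G) :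
    reg σ K (monIdeal σ K G ⊔ Ideal.span {(X x : MvPolynomial σ K)}) ≤
      reg σ K (monIdeal σ K G) := by
  unfold reg
  refine csSup_le ⟨0, 0, 0, (KoszulReg.bettiNe_iff _ 0 0).2 (KoszulReg.bettiP_zero G hne x),
    by simp⟩ ?_
  have hbdd : BddAbove { d : ℤ | ∃ i j : ℕ, BettiNe σ K (monIdeal σ K G) i j ∧
      d = (j : ℤ) - (i : ℤ) } := by
    refine ⟨Fintype.card σ, ?_⟩
    rintro d ⟨i, j, h, rfl⟩
    have := KoszulReg.bettiP_bound G i j ((KoszulReg.bettiNe_iff _ i j).1 h)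
    omega
  rintro d ⟨i, j, h, rfl⟩
  rcases KoszulReg.bettiP_sup G x i j ((KoszulReg.bettiNe_iff _ i j).1 h) with h' | ⟨hi, h'⟩
  · exact le_csSup hbdd ⟨i, j, (KoszulReg.bettiNe_iff _ i j).2 h', rfl⟩
  · refine le_trans ?_
      (le_csSup hbdd ⟨i - 1, j - 1, (KoszulReg.bettiNe_iff _ (i - 1) (j - 1)).2 h', rfl⟩)
    -- The inequality is strict only for `j = 0`, where `j - 1` truncates to `0`.
    omega
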